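/- Let w(x) = log(1 - tanh²(x/√2)). Then the function x ↦ x·w'(x) is strictly decreasing on (0,∞); equivalently, w'(x) - x·e^{w(x)} < 0 for all x > 0. -/

import Mathlib

noncomputable def w (x : ℝ) : ℝ := Real.log (1 - Real.tanh (x / Real.sqrt 2) ^ 2)

theorem w_eq_neg_two_mul_log_cosh (x : ℝ) :
    w x = -2 * Real.log (Real.cosh (x / Real.sqrt 2)) := by
  have hc := Real.cosh_pos (x / Real.sqrt 2)
  have h : 1 - Real.tanh (x / Real.sqrt 2) ^ 2 = (Real.cosh (x / Real.sqrt 2) ^ 2)⁻¹ := by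
    rw [Real.tanh_eq_sinh_div_cosh]
    field_simp
    linarith [Real.cosh_sq (x / Real.sqrt 2)]
  rw [w, h, Real.log_inv, Real.log_pow]
  push_cast
  ring

theorem deriv_w (x : ℝ) : deriv w x = -(Real.sqrt 2 * Real.tanh (x / Real.sqrt 2)) := by
  have hc := (Real.cosh_pos (x / Real.sqrt 2)).ne'
  have h := ((((hasDerivAt_id x).div_const (Real.sqrt 2)).cosh).log hc).const_mul (-2)
  rw [funext w_eq_neg_two_mul_log_cosh]
  refine h.deriv.trans ?_
  have h2 : Real.sqrt 2 ^ 2 = 2 := Real.sq_sqrt (by norm_num)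
  rw [Real.tanh_eq_sinh_div_cosh]
  simp only [id]
  field_simp
  rw [h2]

theorem stmt_8 :
    StrictAntiOn (fun x : ℝ => x * deriv w x) (Set.Ioi 0) ∧
    (∀ x : ℝ, 0 < x → deriv w x - x * Real.exp (w x) < 0) := by
  have hs : 0 < Real.sqrt 2 := by positivity
  have hpos {x : ℝ} (hx : 0 < x) : 0 < Real.tanh (x / Real.sqrt 2) := by
    rw [Real.tanh_eq_sinh_div_cosh]
    exact div_pos (Real.sinh_pos_iff.2 (by positivity)) (Real.cosh_pos _)
  refine ⟨fun a ha b _ hab => ?_, fun x hx => ?_⟩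
  · have ha : 0 < a := ha
    have ht : Real.tanh (a / Real.sqrt 2) < Real.tanh (b / Real.sqrt 2) :=
      (Real.artanh_lt_artanh_iff ⟨Real.neg_one_lt_tanh _, Real.tanh_lt_one _⟩
        ⟨Real.neg_one_lt_tanh _, Real.tanh_lt_one _⟩).1 (by
          rw [Real.artanh_tanh, Real.artanh_tanh]
          gcongr)
    have := mul_lt_mul'' hab ht ha.le (hpos ha).le
    simp only [deriv_w]
    nlinarith
  · rw [deriv_w]
    have := mul_pos hs (hpos hx)
    have := mul_pos hx (Real.exp_pos (w x))
    linarith
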